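/- Let H ∈ (0, 1/2) and let (W¹_t)_{t∈[0,1]} and (W²_t)_{t∈[0,1]} be two independent fractional Brownian motions with Hurst parameter H, each with continuous sample paths, on a common probability space. For 0 ≤ s < t ≤ 1 define the real random variable Ỹ_{s,t} = ( (t−s)^{−3} ∫_{s < u₁ < u₂ < t} [ (u₁−s)(W¹_t − W¹_{u₁}) − (t−u₁)(W¹_{u₁} − W¹_s) ] du₁ du₂ ) · (W²_t − W²_s)². Then there exists a constant C, depending only on H, such that for all 0 ≤ s' < t' ≤ s < t ≤ 1, and also for (s',t') = (s,t): |E( Ỹ_{s',t'} · Ỹ_{s,t} )| ≤ C |ρ_H(s',t';s,t)| (t−s)^{2H} (t'−s')^{2H}, where ρ_H(a,b;c,d) = (1/2)(|d−a|^{2H} + |c−b|^{2H} − |c−a|^{2H} − |d−b|^{2H}). -/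

import Mathlib

/-!
Write `A_{s,t}` for the first factor of `Ytilde`. Independence factors the expectation into
`E[A' A] · E[X'² X²]`, where `X`, `X'` are the increments of `W2`. The second factor is at most
a constant times the product of the variances, by AM-GM and the scaling of Gaussian fourth moments
(`IsFBM.integral_sq_mul_sq_le`).

For the first factor, integrating out `u₂` gives
`(t-s)³ A = ∫_s^t (t-u) [(u-s)(W_t - W_u) - (t-u)(W_u - W_s)] du`, so the integrand is a combination
of increments over subintervals of `[s,t]` with total weight at most `(t-s)²`. The decisive fact is
`abs_fbmCov_le`: the covariance of increments over subintervals is dominated, in absolute value,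
by `|ρ_H(s',t';s,t)|`. For disjoint intervals this holds because concavity of `x ↦ x^{2H}` makes
`-ρ_H` a nonnegative, additive function of rectangles, hence a monotone one; for equal
intervals it is elementary. Fubini (`abs_integral_mul_intervalIntegral_le`) then gives
`|E[A' A]| ≤ |ρ_H(s',t';s,t)|`.

The process `extendProc W` freezes paths outside `[0,1]`; continuity of its paths yields joint
measurability in `(u, ω)`, also with respect to the σ-algebra generated by `W1` alone, as needed
for independence.
-/

open Set MeasureTheory ProbabilityTheory

/-- Covariance of fractional Brownian increments with Hurst parameter `H`:
`ρ_H(a,b;c,d) = (1/2)(|d−a|^{2H} + |c−b|^{2H} − |c−a|^{2H} − |d−b|^{2H})`. -/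
noncomputable def fbmCov (H a b c d : ℝ) : ℝ :=
  (|d - a| ^ (2 * H) + |c - b| ^ (2 * H) - |c - a| ^ (2 * H) - |d - b| ^ (2 * H)) / 2

/-- A (one-dimensional) fractional Brownian motion with Hurst parameter `H` on `[0,1]`:
a measurable process such that every finite linear combination `Σ aᵢ W_{tᵢ}` is a centered
Gaussian random variable, with covariance
`E(W_s W_t) = (1/2)(s^{2H} + t^{2H} − |t−s|^{2H})`. -/
def IsFBM {Ω : Type*} [MeasurableSpace Ω] (P : Measure Ω) (H : ℝ) (W : ℝ → Ω → ℝ) : Prop :=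
  (∀ t ∈ Icc (0 : ℝ) 1, Measurable (W t)) ∧
  (∀ (n : ℕ) (a : Fin n → ℝ) (ts : Fin n → ℝ), (∀ i, ts i ∈ Icc (0 : ℝ) 1) →
    ∃ v : NNReal, Measure.map (fun ω => ∑ i, a i * W (ts i) ω) P = gaussianReal 0 v) ∧
  (∀ s ∈ Icc (0 : ℝ) 1, ∀ t ∈ Icc (0 : ℝ) 1,
    ∫ ω, W s ω * W t ω ∂P = (s ^ (2 * H) + t ^ (2 * H) - |t - s| ^ (2 * H)) / 2)

/-- The random variable
`Ỹ_{s,t} = ((t−s)^{−3} ∫_{s<u₁<u₂<t} [(u₁−s)(W¹_t − W¹_{u₁}) − (t−u₁)(W¹_{u₁} − W¹_s)]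
  du₁ du₂)·(W²_t − W²_s)²`. -/
noncomputable def Ytilde {Ω : Type*} (W1 W2 : ℝ → Ω → ℝ) (s t : ℝ) (ω : Ω) : ℝ :=
  ((t - s) ^ 3)⁻¹ *
    (∫ u₂ in s..t, ∫ u₁ in s..u₂,
      ((u₁ - s) * (W1 t ω - W1 u₁ ω) - (t - u₁) * (W1 u₁ ω - W1 s ω))) *
    (W2 t ω - W2 s ω) ^ 2


/-! ### Monotonicity of the increment covariance -/

lemma rpow_add_rpow_le {q : ℝ} (hq0 : 0 ≤ q) (hq1 : q ≤ 1) {p x y : ℝ} (hp : 0 ≤ p)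
    (hx : 0 ≤ x) (hy : 0 ≤ y) :
    (p + x + y) ^ q + p ^ q ≤ (p + x) ^ q + (p + y) ^ q := by
  rcases (add_nonneg hx hy).eq_or_lt with h | h
  · have hx' : x = 0 := by linarith
    have hy' : y = 0 := by linarith
    simp [hx', hy']
  · have hc := Real.concaveOn_rpow hq0 hq1
    have e : y / (x + y) + x / (x + y) = 1 := by field_simp; ring
    have e' : x / (x + y) + y / (x + y) = 1 := by field_simp
    have m1 : p ∈ Ici (0 : ℝ) := hp
    have m2 : p + x + y ∈ Ici (0 : ℝ) := by simp only [mem_Ici]; linarith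
    -- `p + x` and `p + y` are complementary convex combinations of `p` and `p + x + y`.
    have h1 := hc.2 m1 m2 (div_nonneg hy h.le) (div_nonneg hx h.le) e
    have h2 := hc.2 m1 m2 (div_nonneg hx h.le) (div_nonneg hy h.le) e'
    simp only [smul_eq_mul] at h1 h2
    have e1 : y / (x + y) * p + x / (x + y) * (p + x + y) = p + x := by field_simp; ring
    have e2 : x / (x + y) * p + y / (x + y) * (p + x + y) = p + y := by field_simp; ring
    rw [e1] at h1
    rw [e2] at h2
    have e3 : x / (x + y) = 1 - y / (x + y) := by linarith
    rw [e3] at h1 h2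
    linarith

/-- Increments over ordered disjoint intervals are negatively correlated when `H ≤ 1/2`. -/
lemma fbmCov_nonpos {H : ℝ} (hH : H ∈ Ioo (0 : ℝ) (1 / 2)) {a b c d : ℝ}
    (hab : a ≤ b) (hbc : b ≤ c) (hcd : c ≤ d) : fbmCov H a b c d ≤ 0 := by
  have h := rpow_add_rpow_le (q := 2 * H) (by linarith [hH.1]) (by linarith [hH.2])
    (p := c - b) (x := b - a) (y := d - c) (by linarith) (by linarith) (by linarith)
  unfold fbmCov
  rw [abs_of_nonneg (by linarith : 0 ≤ d - a), abs_of_nonneg (by linarith : 0 ≤ c - b),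
    abs_of_nonneg (by linarith : 0 ≤ c - a), abs_of_nonneg (by linarith : 0 ≤ d - b)]
  rw [show c - b + (b - a) + (d - c) = d - a by ring, show c - b + (b - a) = c - a by ring,
    show c - b + (d - c) = d - b by ring] at h
  linarith

/-- For disjoint intervals, `-fbmCov` is additive and nonnegative on rectangles, hence monotone;
for equal intervals the full variance dominates. -/
lemma abs_fbmCov_le {H : ℝ} (hH : H ∈ Ioo (0 : ℝ) (1 / 2)) {s' t' s t a b c d : ℝ}
    (h : t' ≤ s ∨ (s' = s ∧ t' = t)) (h1 : s' ≤ c) (h2 : c ≤ d) (h3 : d ≤ t')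
    (h4 : s ≤ a) (h5 : a ≤ b) (h6 : b ≤ t) :
    |fbmCov H c d a b| ≤ |fbmCov H s' t' s t| := by
  rcases h with h | ⟨rfl, rfl⟩
  · have i1 : fbmCov H s' t' s t ≤ fbmCov H c d s t := by
      have := fbmCov_nonpos hH h1 (by linarith : c ≤ s) (by linarith : s ≤ t)
      have := fbmCov_nonpos hH h3 h (by linarith : s ≤ t)
      unfold fbmCov at *
      linarith
    have i2 : fbmCov H c d s t ≤ fbmCov H c d a b := by
      have := fbmCov_nonpos hH h2 (by linarith : d ≤ s) h4
      have := fbmCov_nonpos hH h2 (by linarith : d ≤ b) h6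
      unfold fbmCov at *
      linarith
    have i3 := fbmCov_nonpos hH h2 (by linarith : d ≤ a) h5
    rw [abs_of_nonpos i3, abs_of_nonpos (by linarith)]
    linarith
  · have hq : 0 < 2 * H := by linarith [hH.1]
    have e : fbmCov H s' t' s' t' = (t' - s') ^ (2 * H) := by
      have e0 : |s' - t'| = t' - s' := by rw [abs_sub_comm, abs_of_nonneg (by linarith)]
      have e1 : |t' - s'| = t' - s' := abs_of_nonneg (by linarith)
      simp only [fbmCov, e0, e1, sub_self, abs_zero, Real.zero_rpow hq.ne']
      ring
    have hn : 0 ≤ (t' - s') ^ (2 * H) := Real.rpow_nonneg (by linarith) _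
    have k : ∀ x y : ℝ, s' ≤ x → x ≤ t' → s' ≤ y → y ≤ t' →
        0 ≤ |x - y| ^ (2 * H) ∧ |x - y| ^ (2 * H) ≤ (t' - s') ^ (2 * H) := by
      intro x y _ _ _ _
      refine ⟨Real.rpow_nonneg (abs_nonneg _) _,
        Real.rpow_le_rpow (abs_nonneg _) ?_ hq.le⟩
      rw [abs_le]
      constructor <;> linarith
    rw [e, abs_of_nonneg hn]
    have k1 := k b c (by linarith) (by linarith) (by linarith) (by linarith)
    have k2 := k a d (by linarith) (by linarith) (by linarith) (by linarith)
    have k3 := k a c (by linarith) (by linarith) (by linarith) (by linarith)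
    have k4 := k b d (by linarith) (by linarith) (by linarith) (by linarith)
    unfold fbmCov
    rw [abs_le]
    constructor <;> linarith

/-! ### Moments of increments -/

lemma integral_sq_gaussianReal (v : NNReal) : ∫ x, x ^ 2 ∂(gaussianReal 0 v) = v := by
  have h := variance_fun_id_gaussianReal (μ := 0) (v := v)
  rw [variance_of_integral_eq_zero (by fun_prop) (by simp)] at h
  exact h

/-- Scaling of the fourth moment; the constant is left as the fourth moment of `N(0,1)`. -/
lemma integral_pow_four_gaussianReal (v : NNReal) :
    ∫ x, x ^ 4 ∂(gaussianReal 0 v) = (∫ x, x ^ 4 ∂(gaussianReal 0 1)) * (v : ℝ) ^ 2 := by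
  have h : gaussianReal 0 v = (gaussianReal 0 1).map (fun x => √(v : ℝ) * x) := by
    rw [gaussianReal_map_const_mul]
    congr 1
    · simp
    · ext; simp
  rw [h, integral_map (by fun_prop) (by fun_prop)]
  have e : √(v : ℝ) ^ 4 = (v : ℝ) ^ 2 := by
    rw [show (4 : ℕ) = 2 * 2 from rfl, pow_mul, Real.sq_sqrt v.coe_nonneg]
  simp_rw [mul_pow, e]
  rw [integral_const_mul, mul_comm]

section Moments

variable {Ω : Type*} [MeasurableSpace Ω] {P : Measure Ω} {H : ℝ} {W : ℝ → Ω → ℝ}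

lemma integral_sub_sub_sub {f₁ f₂ f₃ f₄ : Ω → ℝ} (h₁ : Integrable f₁ P) (h₂ : Integrable f₂ P)
    (h₃ : Integrable f₃ P) (h₄ : Integrable f₄ P) :
    ∫ ω, ((f₁ ω - f₂ ω) - (f₃ ω - f₄ ω)) ∂P =
      (∫ ω, f₁ ω ∂P - ∫ ω, f₂ ω ∂P) - (∫ ω, f₃ ω ∂P - ∫ ω, f₄ ω ∂P) := by
  rw [← integral_sub h₁ h₂, ← integral_sub h₃ h₄]
  exact integral_sub (h₁.sub h₂) (h₃.sub h₄)

lemma IsFBM.memLp (hW : IsFBM P H W) {t : ℝ} (ht : t ∈ Icc (0 : ℝ) 1) : MemLp (W t) 4 P := by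
  obtain ⟨v, hv⟩ := hW.2.1 1 (fun _ => 1) (fun _ => t) (fun _ => ht)
  simp only [Fin.sum_univ_one, one_mul] at hv
  have h := memLp_id_gaussianReal' (μ := 0) (v := v) 4 (by norm_num)
  rw [← hv, memLp_map_measure_iff (by fun_prop) (hW.1 t ht).aemeasurable] at h
  exact h

lemma IsFBM.integral_mul_increments [IsProbabilityMeasure P] (hW : IsFBM P H W) {a b c d : ℝ}
    (ha : a ∈ Icc (0 : ℝ) 1) (hb : b ∈ Icc (0 : ℝ) 1) (hc : c ∈ Icc (0 : ℝ) 1)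
    (hd : d ∈ Icc (0 : ℝ) 1) :
    ∫ ω, (W b ω - W a ω) * (W d ω - W c ω) ∂P = fbmCov H a b c d := by
  have m : ∀ x ∈ Icc (0 : ℝ) 1, MemLp (W x) 2 P := fun x hx =>
    (hW.memLp hx).mono_exponent (by norm_num)
  have i : ∀ x ∈ Icc (0 : ℝ) 1, ∀ y ∈ Icc (0 : ℝ) 1, Integrable (fun ω => W x ω * W y ω) P :=
    fun x hx y hy => (m x hx).integrable_mul (m y hy)
  have e : ∀ ω, (W b ω - W a ω) * (W d ω - W c ω) =
      (W b ω * W d ω - W b ω * W c ω) - (W a ω * W d ω - W a ω * W c ω) := fun ω => by ring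
  simp_rw [e]
  rw [integral_sub_sub_sub (i b hb d hd) (i b hb c hc) (i a ha d hd) (i a ha c hc),
    hW.2.2 b hb d hd, hW.2.2 b hb c hc, hW.2.2 a ha d hd, hW.2.2 a ha c hc]
  unfold fbmCov
  ring

lemma fbmCov_self (hH : H ∈ Ioo (0 : ℝ) (1 / 2)) {a b : ℝ} (hab : a ≤ b) :
    fbmCov H a b a b = (b - a) ^ (2 * H) := by
  have e0 : |a - b| = b - a := by rw [abs_sub_comm, abs_of_nonneg (by linarith)]
  have e1 : |b - a| = b - a := abs_of_nonneg (by linarith)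
  simp only [fbmCov, e0, e1, sub_self, abs_zero, Real.zero_rpow
    (by linarith [hH.1] : (0 : ℝ) < 2 * H).ne']
  ring

lemma IsFBM.integral_increment_pow_four [IsProbabilityMeasure P] (hW : IsFBM P H W)
    (hH : H ∈ Ioo (0 : ℝ) (1 / 2)) {a b : ℝ}
    (ha : a ∈ Icc (0 : ℝ) 1) (hb : b ∈ Icc (0 : ℝ) 1) (hab : a ≤ b) :
    ∫ ω, (W b ω - W a ω) ^ 4 ∂P =
      (∫ x, x ^ 4 ∂(gaussianReal 0 1)) * ((b - a) ^ (2 * H)) ^ 2 := by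
  obtain ⟨v, hv⟩ := hW.2.1 2 ![1, -1] ![b, a] (by intro i; fin_cases i <;> assumption)
  have e : (fun ω => ∑ i, (![1, -1] : Fin 2 → ℝ) i * W ((![b, a] : Fin 2 → ℝ) i) ω) =
      fun ω => W b ω - W a ω := by
    ext ω
    simp [Fin.sum_univ_two]
    ring
  rw [e] at hv
  have hm : AEMeasurable (fun ω => W b ω - W a ω) P :=
    ((hW.1 b hb).sub (hW.1 a ha)).aemeasurable
  have h4 := integral_pow_four_gaussianReal v
  have h2 := integral_sq_gaussianReal v
  rw [← hv, integral_map hm (by fun_prop)] at h2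
  rw [← hv, integral_map hm (by fun_prop)] at h4
  have h2' := hW.integral_mul_increments ha hb ha hb
  rw [fbmCov_self hH hab] at h2'
  rw [h4, ← h2', ← h2]
  simp_rw [pow_two]

/-- Up to a universal constant, `E[X² Y²]` is at most the product of the variances of the two
increments `X`, `Y`, whatever their correlation. -/
lemma IsFBM.integral_sq_mul_sq_le [IsProbabilityMeasure P] (hW : IsFBM P H W)
    (hH : H ∈ Ioo (0 : ℝ) (1 / 2)) {a b c d : ℝ}
    (ha : a ∈ Icc (0 : ℝ) 1) (hb : b ∈ Icc (0 : ℝ) 1) (hab : a < b)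
    (hc : c ∈ Icc (0 : ℝ) 1) (hd : d ∈ Icc (0 : ℝ) 1) (hcd : c < d) :
    ∫ ω, (W b ω - W a ω) ^ 2 * (W d ω - W c ω) ^ 2 ∂P ≤
      (∫ x, x ^ 4 ∂(gaussianReal 0 1)) * (b - a) ^ (2 * H) * (d - c) ^ (2 * H) := by
  have h1 := hW.integral_increment_pow_four hH ha hb hab.le
  have h2 := hW.integral_increment_pow_four hH hc hd hcd.le
  have h4 : ∀ X : Ω → ℝ, MemLp X 4 P → Integrable (fun ω => X ω ^ 4) P := fun X hX => by
    have hX' : MemLp X ((4 : ℕ) : ENNReal) P := by simpa using hX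
    have := hX'.integrable_norm_pow (by norm_num)
    simpa only [Real.norm_eq_abs, Even.pow_abs (by decide : Even 4)] using this
  have i1 : Integrable (fun ω => (W b ω - W a ω) ^ 4) P :=
    h4 (fun ω => W b ω - W a ω) ((hW.memLp hb).sub (hW.memLp ha))
  have i2 : Integrable (fun ω => (W d ω - W c ω) ^ 4) P :=
    h4 (fun ω => W d ω - W c ω) ((hW.memLp hd).sub (hW.memLp hc))
  set p := (b - a) ^ (2 * H) with hp
  set q := (d - c) ^ (2 * H) with hq
  have p0 : 0 < p := Real.rpow_pos_of_pos (by linarith) _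
  have q0 : 0 < q := Real.rpow_pos_of_pos (by linarith) _
  set M := ∫ x, x ^ 4 ∂(gaussianReal 0 1)
  -- AM-GM with weights chosen so that both terms contribute `M p q / 2`.
  calc ∫ ω, (W b ω - W a ω) ^ 2 * (W d ω - W c ω) ^ 2 ∂P
      ≤ ∫ ω, (q / p / 2 * (W b ω - W a ω) ^ 4 + p / q / 2 * (W d ω - W c ω) ^ 4) ∂P := by
        refine integral_mono_of_nonneg (ae_of_all _ fun ω => by positivity)
          ((i1.const_mul _).add (i2.const_mul _)) (ae_of_all _ fun ω => ?_)
        simp only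
        set X := W b ω - W a ω
        set Y := W d ω - W c ω
        have : q / p / 2 * X ^ 4 + p / q / 2 * Y ^ 4 - X ^ 2 * Y ^ 2 =
            (q * X ^ 2 - p * Y ^ 2) ^ 2 / (2 * p * q) := by
          field_simp
          ring
        have h0 : 0 ≤ (q * X ^ 2 - p * Y ^ 2) ^ 2 / (2 * p * q) := by positivity
        linarith
    _ = M * p * q := by
        rw [integral_add (i1.const_mul _) (i2.const_mul _), integral_const_mul,
          integral_const_mul, h1, h2]
        field_simp
        ring

/-! ### Expectation of a product of two time integrals -/

/-- Fubini: a uniform bound on `E[f_u g_v]` passes to the product of the time integrals. -/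
lemma abs_integral_mul_intervalIntegral_le [IsProbabilityMeasure P] {f g : ℝ → Ω → ℝ}
    (hf : Measurable (Function.uncurry f)) (hg : Measurable (Function.uncurry g))
    {s t s' t' K B : ℝ} (hst : s ≤ t) (hst' : s' ≤ t')
    (hf2 : ∀ u ∈ Icc s t, MemLp (f u) 2 P ∧ ∫ ω, f u ω ^ 2 ∂P ≤ K)
    (hg2 : ∀ u ∈ Icc s' t', MemLp (g u) 2 P ∧ ∫ ω, g u ω ^ 2 ∂P ≤ K)
    (hB : ∀ u ∈ Icc s t, ∀ v ∈ Icc s' t', |∫ ω, f u ω * g v ω ∂P| ≤ B) :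
    |∫ ω, (∫ u in s..t, f u ω) * (∫ v in s'..t', g v ω) ∂P| ≤
      B * ((t - s) * (t' - s')) := by
  set ν := (volume.restrict (Ioc s t)).prod (volume.restrict (Ioc s' t')) with hν
  have hνr : ν = (volume.prod volume).restrict (Ioc s t ×ˢ Ioc s' t') :=
    Measure.prod_restrict _ _
  have hae : ∀ᵐ z ∂ν, z.1 ∈ Icc s t ∧ z.2 ∈ Icc s' t' := by
    rw [hνr]
    filter_upwards [ae_restrict_mem (measurableSet_Ioc.prod measurableSet_Ioc)] with z hz
    exact ⟨Ioc_subset_Icc_self hz.1, Ioc_subset_Icc_self hz.2⟩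
  have hνuniv : ν.real univ = (t - s) * (t' - s') := by
    rw [hν, ← univ_prod_univ, measureReal_prod_prod]
    simp [measureReal_def, hst, hst']
  have hmeas : Measurable (fun p : Ω × (ℝ × ℝ) => f p.2.1 p.1 * g p.2.2 p.1) :=
    (hf.comp (by fun_prop : Measurable fun p : Ω × (ℝ × ℝ) => (p.2.1, p.1))).mul
      (hg.comp (by fun_prop : Measurable fun p : Ω × (ℝ × ℝ) => (p.2.2, p.1)))
  have hint : Integrable (fun p : Ω × (ℝ × ℝ) => f p.2.1 p.1 * g p.2.2 p.1) (P.prod ν) := by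
    rw [integrable_prod_iff' hmeas.aestronglyMeasurable]
    refine ⟨?_, ?_⟩
    · filter_upwards [hae] with z hz
      exact (hf2 _ hz.1).1.integrable_mul (hg2 _ hz.2).1
    · have hsm : AEStronglyMeasurable (fun z : ℝ × ℝ => ∫ ω, ‖f z.1 ω * g z.2 ω‖ ∂P) ν :=
        (hmeas.norm.comp
          measurable_swap).stronglyMeasurable.integral_prod_right'.aestronglyMeasurable
      refine Integrable.of_bound (C := K) hsm ?_
      filter_upwards [hae] with z hz
      obtain ⟨a1, a2⟩ := hf2 _ hz.1
      obtain ⟨b1, b2⟩ := hg2 _ hz.2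
      rw [Real.norm_of_nonneg (integral_nonneg fun ω => norm_nonneg _)]
      calc ∫ ω, ‖f z.1 ω * g z.2 ω‖ ∂P ≤ ∫ ω, (f z.1 ω ^ 2 / 2 + g z.2 ω ^ 2 / 2) ∂P := by
            refine integral_mono_of_nonneg (ae_of_all _ fun ω => norm_nonneg _)
              ((a1.integrable_sq.div_const _).add (b1.integrable_sq.div_const _))
              (ae_of_all _ fun ω => ?_)
            simp only [Real.norm_eq_abs, abs_mul]
            have := sq_nonneg (|f z.1 ω| - |g z.2 ω|)
            rw [← sq_abs (f z.1 ω), ← sq_abs (g z.2 ω)]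
            linarith
        _ ≤ K := by
            rw [integral_add (a1.integrable_sq.div_const _) (b1.integrable_sq.div_const _),
              integral_div, integral_div]
            linarith
  have e : ∀ ω, (∫ u in s..t, f u ω) * (∫ v in s'..t', g v ω) =
      ∫ z, f z.1 ω * g z.2 ω ∂ν := by
    intro ω
    rw [intervalIntegral.integral_of_le hst, intervalIntegral.integral_of_le hst', hν]
    exact (integral_prod_mul (fun u => f u ω) (fun v => g v ω)).symm
  simp_rw [e]
  rw [integral_integral_swap hint, ← hνuniv]
  have hb : ∀ᵐ z ∂ν, ‖∫ ω, f z.1 ω * g z.2 ω ∂P‖ ≤ B := by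
    filter_upwards [hae] with z hz
    exact hB _ hz.1 _ hz.2
  exact norm_integral_le_of_norm_le_const hb

end Moments

/-! ### The area functional as a single time integral -/

section Area

variable {Ω : Type*} {W : ℝ → Ω → ℝ}

/-- Integrand of the first factor of `Ytilde` after the iterated integral over `s < u₁ < u₂ < t`
has been reduced to a single integral in `u = u₁`; the extra factor `t - u` is the length of the
range of `u₂`. -/
noncomputable def areaDensity (W : ℝ → Ω → ℝ) (s t u : ℝ) (ω : Ω) : ℝ :=
  (t - u) * ((u - s) * (W t ω - W u ω) - (t - u) * (W u ω - W s ω))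

/-- Integration by parts removes the outer integral. -/
lemma intervalIntegral_iterated {F : ℝ → ℝ} (hF : Continuous F) (s t : ℝ) :
    ∫ u₂ in s..t, ∫ u₁ in s..u₂, F u₁ = ∫ u in s..t, (t - u) * F u := by
  have h := intervalIntegral.integral_mul_deriv_eq_deriv_mul (a := s) (b := t)
    (u := fun x => ∫ y in s..x, F y) (v := fun x => x - t) (u' := F) (v' := fun _ => 1)
    (fun x _ => intervalIntegral.integral_hasDerivAt_right (hF.intervalIntegrable _ _)
      (hF.stronglyMeasurableAtFilter _ _) hF.continuousAt)
    (fun x _ => (hasDerivAt_id x).sub_const t)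
    (hF.intervalIntegrable _ _) (by simp)
  simp only [mul_one, sub_self, mul_zero, intervalIntegral.integral_same, zero_mul,
    zero_sub] at h
  rw [h, ← intervalIntegral.integral_neg]
  congr 1
  ext u
  ring

/-- The process frozen outside `[0,1]`, so that its paths are continuous on all of `ℝ`. -/
noncomputable def extendProc (W : ℝ → Ω → ℝ) (u : ℝ) : Ω → ℝ := W (projIcc 0 1 zero_le_one u : ℝ)

lemma extendProc_of_mem {u : ℝ} (hu : u ∈ Icc (0 : ℝ) 1) : extendProc W u = W u := by
  simp [extendProc, projIcc_of_mem zero_le_one hu]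

lemma continuous_extendProc (hc : ∀ ω, ContinuousOn (fun u => W u ω) (Icc 0 1)) (ω : Ω) :
    Continuous fun u => extendProc W u ω :=
  (hc ω).comp_continuous (continuous_subtype_val.comp continuous_projIcc) fun u =>
    (projIcc (0 : ℝ) 1 zero_le_one u).2

lemma measurable_areaDensity {m : MeasurableSpace Ω} {V : ℝ → Ω → ℝ}
    (hm : ∀ u, Measurable (V u)) (hc : ∀ ω, Continuous fun u => V u ω) (s t : ℝ) :
    Measurable (Function.uncurry (areaDensity V s t)) := by
  refine measurable_uncurry_of_continuous_of_measurable (fun ω => ?_) fun u => ?_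
  · have := hc ω
    unfold areaDensity
    fun_prop
  · unfold areaDensity
    have := hm
    fun_prop

lemma measurable_integral_areaDensity {m : MeasurableSpace Ω} {V : ℝ → Ω → ℝ}
    (hm : ∀ u, Measurable (V u)) (hc : ∀ ω, Continuous fun u => V u ω) {s t : ℝ} (hst : s ≤ t) :
    Measurable fun ω => ∫ u in s..t, areaDensity V s t u ω := by
  simp_rw [intervalIntegral.integral_of_le hst]
  exact ((measurable_areaDensity hm hc s t).comp
    measurable_swap).stronglyMeasurable.integral_prod_right'.measurable

/-- The σ-algebra generated by the process on `[0,1]`. -/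
abbrev pathSigma (W : ℝ → Ω → ℝ) : MeasurableSpace Ω :=
  ⨆ t ∈ Icc (0 : ℝ) 1, MeasurableSpace.comap (W t) inferInstance

lemma measurable_pathSigma {u : ℝ} (hu : u ∈ Icc (0 : ℝ) 1) : Measurable[pathSigma W] (W u) :=
  measurable_iff_comap_le.2
    (le_iSup₂ (f := fun t (_ : t ∈ Icc (0 : ℝ) 1) => MeasurableSpace.comap (W t) _) u hu)

lemma Ytilde_eq {W1 W2 : ℝ → Ω → ℝ} (hc : ∀ ω, ContinuousOn (fun u => W1 u ω) (Icc 0 1))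
    {s t : ℝ} (hs : 0 ≤ s) (hst : s ≤ t) (ht : t ≤ 1) (ω : Ω) :
    Ytilde W1 W2 s t ω =
      ((t - s) ^ 3)⁻¹ * (∫ u in s..t, areaDensity (extendProc W1) s t u ω) *
        (W2 t ω - W2 s ω) ^ 2 := by
  unfold Ytilde areaDensity
  congr 2
  have hV := continuous_extendProc hc ω
  rw [← intervalIntegral_iterated (by fun_prop)]
  have hst0 : s ∈ Icc (0 : ℝ) 1 := ⟨hs, by linarith⟩
  have hst1 : t ∈ Icc (0 : ℝ) 1 := ⟨by linarith, ht⟩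
  refine intervalIntegral.integral_congr fun u₂ hu₂ => ?_
  refine intervalIntegral.integral_congr fun u₁ hu₁ => ?_
  rw [uIcc_of_le hst] at hu₂
  rw [uIcc_of_le hu₂.1] at hu₁
  have hu : u₁ ∈ Icc (0 : ℝ) 1 := ⟨by linarith [hu₁.1], by linarith [hu₁.2, hu₂.2]⟩
  simp only [extendProc_of_mem hu, extendProc_of_mem hst0, extendProc_of_mem hst1]

end Area

/-! ### Bounds for the area functional -/

section Bounds

variable {Ω : Type*} [MeasurableSpace Ω] {P : Measure Ω} {H : ℝ} {W : ℝ → Ω → ℝ}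

lemma IsFBM.pathSigma_le (hW : IsFBM P H W) : pathSigma W ≤ ‹MeasurableSpace Ω› :=
  iSup₂_le fun u hu => measurable_iff_comap_le.1 (hW.1 u hu)

lemma IsFBM.memLp_areaDensity [IsProbabilityMeasure P] (hW : IsFBM P H W) {s t u : ℝ}
    (hs : s ∈ Icc (0 : ℝ) 1) (ht : t ∈ Icc (0 : ℝ) 1) (hu : u ∈ Icc (0 : ℝ) 1) :
    MemLp (areaDensity W s t u) 2 P := by
  have m : ∀ x ∈ Icc (0 : ℝ) 1, MemLp (W x) 2 P := fun x hx =>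
    (hW.memLp hx).mono_exponent (by norm_num)
  exact ((((m t ht).sub (m u hu)).const_mul (u - s)).sub
    (((m u hu).sub (m s hs)).const_mul (t - u))).const_mul (t - u)

/-- Each integrand is a combination of increments over subintervals with total weight
`(t - u)(t - s)`, so the covariance of two of them is controlled by the covariance of the
full increments. -/
lemma IsFBM.abs_integral_areaDensity_mul_le [IsProbabilityMeasure P] (hW : IsFBM P H W)
    (hH : H ∈ Ioo (0 : ℝ) (1 / 2)) {s' t' s t u v : ℝ}
    (h0 : 0 ≤ s') (h1 : s' ≤ t') (h2 : s ≤ t) (h3 : t ≤ 1) (hs : 0 ≤ s) (ht' : t' ≤ 1)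
    (h : t' ≤ s ∨ (s' = s ∧ t' = t)) (hu : u ∈ Icc s' t') (hv : v ∈ Icc s t) :
    |∫ ω, areaDensity W s' t' u ω * areaDensity W s t v ω ∂P| ≤
      |fbmCov H s' t' s t| * ((t' - s') ^ 2 * (t - s) ^ 2) := by
  obtain ⟨hu1, hu2⟩ := hu
  obtain ⟨hv1, hv2⟩ := hv
  have ms' : s' ∈ Icc (0 : ℝ) 1 := ⟨h0, by linarith⟩
  have mt' : t' ∈ Icc (0 : ℝ) 1 := ⟨by linarith, ht'⟩
  have ms : s ∈ Icc (0 : ℝ) 1 := ⟨hs, by linarith⟩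
  have mt : t ∈ Icc (0 : ℝ) 1 := ⟨by linarith, h3⟩
  have mu : u ∈ Icc (0 : ℝ) 1 := ⟨by linarith, by linarith⟩
  have mv : v ∈ Icc (0 : ℝ) 1 := ⟨by linarith, by linarith⟩
  have m : ∀ x ∈ Icc (0 : ℝ) 1, MemLp (W x) 2 P := fun x hx =>
    (hW.memLp hx).mono_exponent (by norm_num)
  have i : ∀ a ∈ Icc (0 : ℝ) 1, ∀ b ∈ Icc (0 : ℝ) 1, ∀ c ∈ Icc (0 : ℝ) 1, ∀ d ∈ Icc (0 : ℝ) 1,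
      Integrable (fun ω => (W b ω - W a ω) * (W d ω - W c ω)) P :=
    fun a ha b hb c hc d hd => ((m b hb).sub (m a ha)).integrable_mul ((m d hd).sub (m c hc))
  have e : ∀ ω, areaDensity W s' t' u ω * areaDensity W s t v ω =
      (t' - u) * (t - v) *
      (((u - s') * (v - s) * ((W t' ω - W u ω) * (W t ω - W v ω)) -
        (u - s') * (t - v) * ((W t' ω - W u ω) * (W v ω - W s ω))) -
       ((t' - u) * (v - s) * ((W u ω - W s' ω) * (W t ω - W v ω)) -
        (t' - u) * (t - v) * ((W u ω - W s' ω) * (W v ω - W s ω)))) := by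
    intro ω
    unfold areaDensity
    ring
  simp_rw [e]
  have j1 := (i u mu t' mt' v mv t mt).const_mul ((u - s') * (v - s))
  have j2 := (i u mu t' mt' s ms v mv).const_mul ((u - s') * (t - v))
  have j3 := (i s' ms' u mu v mv t mt).const_mul ((t' - u) * (v - s))
  have j4 := (i s' ms' u mu s ms v mv).const_mul ((t' - u) * (t - v))
  rw [integral_const_mul, integral_sub_sub_sub j1 j2 j3 j4]
  simp only [integral_const_mul]
  rw [hW.integral_mul_increments mu mt' mv mt, hW.integral_mul_increments mu mt' ms mv,
    hW.integral_mul_increments ms' mu mv mt, hW.integral_mul_increments ms' mu ms mv]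
  have b1 := abs_le.1 (abs_fbmCov_le hH h hu1 hu2 le_rfl hv1 hv2 le_rfl)
  have b2 := abs_le.1 (abs_fbmCov_le hH h hu1 hu2 le_rfl le_rfl hv1 hv2)
  have b3 := abs_le.1 (abs_fbmCov_le hH h le_rfl hu1 hu2 hv1 hv2 le_rfl)
  have b4 := abs_le.1 (abs_fbmCov_le hH h le_rfl hu1 hu2 le_rfl hv1 hv2)
  set R := |fbmCov H s' t' s t|
  have hR : 0 ≤ R := abs_nonneg _
  have w1 : 0 ≤ u - s' := by linarith
  have w2 : 0 ≤ t' - u := by linarith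
  have w3 : 0 ≤ v - s := by linarith
  have w4 : 0 ≤ t - v := by linarith
  have p1 := mul_nonneg w1 w3
  have p2 := mul_nonneg w1 w4
  have p3 := mul_nonneg w2 w3
  have p4 := mul_nonneg w2 w4
  rw [abs_mul, abs_of_nonneg p4]
  calc _ ≤ (t' - u) * (t - v) * (R * ((t' - s') * (t - s))) := by
        refine mul_le_mul_of_nonneg_left ?_ p4
        have es : (t' - s') * (t - s) = (u - s') * (v - s) + (u - s') * (t - v) +
          (t' - u) * (v - s) + (t' - u) * (t - v) := by ring
        rw [es, abs_le]
        constructor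
        · linarith [mul_le_mul_of_nonneg_left b1.1 p1, mul_le_mul_of_nonneg_left b2.2 p2,
            mul_le_mul_of_nonneg_left b3.2 p3, mul_le_mul_of_nonneg_left b4.1 p4]
        · linarith [mul_le_mul_of_nonneg_left b1.2 p1, mul_le_mul_of_nonneg_left b2.1 p2,
            mul_le_mul_of_nonneg_left b3.1 p3, mul_le_mul_of_nonneg_left b4.2 p4]
    _ ≤ ((t' - s') * (t - s)) * (R * ((t' - s') * (t - s))) := by
        refine mul_le_mul_of_nonneg_right ?_ (mul_nonneg hR (mul_nonneg ?_ ?_))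
        · exact mul_le_mul (by linarith) (by linarith) w4 (by linarith)
        · linarith
        · linarith
    _ = _ := by ring

lemma IsFBM.abs_integral_area_mul_le [IsProbabilityMeasure P] (hW : IsFBM P H W)
    (hH : H ∈ Ioo (0 : ℝ) (1 / 2)) (hc : ∀ ω, ContinuousOn (fun u => W u ω) (Icc 0 1))
    {s' t' s t : ℝ}
    (h0 : 0 ≤ s') (h1 : s' ≤ t') (h2 : s ≤ t) (h3 : t ≤ 1) (hs : 0 ≤ s) (ht' : t' ≤ 1)
    (h : t' ≤ s ∨ (s' = s ∧ t' = t)) :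
    |∫ ω, (∫ u in s'..t', areaDensity (extendProc W) s' t' u ω) *
        (∫ v in s..t, areaDensity (extendProc W) s t v ω) ∂P| ≤
      |fbmCov H s' t' s t| * ((t' - s') ^ 3 * (t - s) ^ 3) := by
  have hm : ∀ u, Measurable (extendProc W u) := fun u => hW.1 _ (projIcc _ _ _ u).2
  have hcV := continuous_extendProc hc
  have hext : ∀ {a b : ℝ}, 0 ≤ a → b ≤ 1 → ∀ u ∈ Icc a b,
      areaDensity (extendProc W) a b u = areaDensity W a b u := by
    intro a b ha hb u hu
    have hab : a ≤ b := hu.1.trans hu.2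
    ext ω
    unfold areaDensity
    rw [extendProc_of_mem ⟨ha, hab.trans hb⟩, extendProc_of_mem ⟨ha.trans hab, hb⟩,
      extendProc_of_mem ⟨ha.trans hu.1, hu.2.trans hb⟩]
  -- The crude bound `1` on second moments only serves integrability.
  have hsq : ∀ {a b : ℝ}, 0 ≤ a → b ≤ 1 → ∀ u ∈ Icc a b,
      MemLp (areaDensity (extendProc W) a b u) 2 P ∧
        ∫ ω, areaDensity (extendProc W) a b u ω ^ 2 ∂P ≤ 1 := by
    intro a b ha hb u hu
    have hab : a ≤ b := hu.1.trans hu.2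
    rw [hext ha hb u hu]
    refine ⟨hW.memLp_areaDensity ⟨ha, hab.trans hb⟩ ⟨ha.trans hab, hb⟩
      ⟨ha.trans hu.1, hu.2.trans hb⟩, ?_⟩
    have hh := (abs_le.1 (hW.abs_integral_areaDensity_mul_le hH ha hab hab hb ha hb
      (Or.inr ⟨rfl, rfl⟩) hu hu)).2
    simp_rw [← pow_two] at hh
    refine hh.trans ?_
    rw [fbmCov_self hH hab, abs_of_nonneg (Real.rpow_nonneg (by linarith) _)]
    have r1 : (b - a) ^ (2 * H) ≤ 1 :=
      Real.rpow_le_one (by linarith) (by linarith) (by linarith [hH.1])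
    have r2 : (b - a) ^ 2 ≤ 1 := pow_le_one₀ (by linarith) (by linarith)
    exact mul_le_one₀ r1 (by positivity) (pow_le_one₀ (by positivity) r2)
  refine (abs_integral_mul_intervalIntegral_le (measurable_areaDensity hm hcV s' t')
    (measurable_areaDensity hm hcV s t) h1 h2 (hsq h0 ht') (hsq hs h3)
    (B := |fbmCov H s' t' s t| * ((t' - s') ^ 2 * (t - s) ^ 2)) ?_).trans (le_of_eq (by ring))
  intro u hu v hv
  rw [hext h0 ht' u hu, hext hs h3 v hv]
  exact hW.abs_integral_areaDensity_mul_le hH h0 h1 h2 h3 hs ht' h hu hv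

end Bounds

/-- For two independent fractional Brownian motions `W¹, W²` with Hurst parameter
`H ∈ (0,1/2)` and continuous sample paths, there is a constant `C = C(H)` such that for all
`0 ≤ s' < t' ≤ s < t ≤ 1`, and also for `(s',t') = (s,t)`:
`|E(Ỹ_{s',t'} Ỹ_{s,t})| ≤ C |ρ_H(s',t';s,t)| (t−s)^{2H} (t'−s')^{2H}`. -/
theorem Ytilde_cov_bound {Ω : Type*} [MeasurableSpace Ω]
    (P : Measure Ω) [IsProbabilityMeasure P]
    (H : ℝ) (hH : H ∈ Ioo (0 : ℝ) (1 / 2)) (W1 W2 : ℝ → Ω → ℝ)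
    (hW1 : IsFBM P H W1) (hW2 : IsFBM P H W2)
    (hcont1 : ∀ ω, ContinuousOn (fun u => W1 u ω) (Icc 0 1))
    (hcont2 : ∀ ω, ContinuousOn (fun u => W2 u ω) (Icc 0 1))
    (hindep : Indep
      (⨆ t ∈ Icc (0 : ℝ) 1, MeasurableSpace.comap (W1 t) inferInstance)
      (⨆ t ∈ Icc (0 : ℝ) 1, MeasurableSpace.comap (W2 t) inferInstance) P) :
    ∃ C : ℝ, ∀ s' t' s t : ℝ,
      0 ≤ s' → s' < t' → s < t → t ≤ 1 → (t' ≤ s ∨ (s' = s ∧ t' = t)) →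
      |∫ ω, Ytilde W1 W2 s' t' ω * Ytilde W1 W2 s t ω ∂P| ≤
        C * |fbmCov H s' t' s t| * (t - s) ^ (2 * H) * (t' - s') ^ (2 * H) := by
  refine ⟨∫ x, x ^ 4 ∂(gaussianReal 0 1), fun s' t' s t h0 h1 h2 h3 h => ?_⟩
  have hs : 0 ≤ s := by rcases h with h | ⟨h, -⟩ <;> linarith
  have ht' : t' ≤ 1 := by rcases h with h | ⟨-, h⟩ <;> linarith
  have ms' : s' ∈ Icc (0 : ℝ) 1 := ⟨h0, by linarith⟩
  have mt' : t' ∈ Icc (0 : ℝ) 1 := ⟨by linarith, ht'⟩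
  have ms : s ∈ Icc (0 : ℝ) 1 := ⟨hs, by linarith⟩
  have mt : t ∈ Icc (0 : ℝ) 1 := ⟨by linarith, h3⟩
  set A : Ω → ℝ := fun ω => (∫ u in s'..t', areaDensity (extendProc W1) s' t' u ω) *
    (∫ v in s..t, areaDensity (extendProc W1) s t v ω) with hA
  set Q : Ω → ℝ := fun ω => (W2 t' ω - W2 s' ω) ^ 2 * (W2 t ω - W2 s ω) ^ 2 with hQ
  have e : ∀ ω, Ytilde W1 W2 s' t' ω * Ytilde W1 W2 s t ω =
      (((t' - s') ^ 3)⁻¹ * ((t - s) ^ 3)⁻¹) * (A ω * Q ω) := by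
    intro ω
    rw [Ytilde_eq hcont1 h0 h1.le ht' ω, Ytilde_eq hcont1 hs h2.le h3 ω]
    simp only [hA, hQ]
    ring
  have kV : ∀ u, Measurable[pathSigma W1] (extendProc W1 u) := fun u =>
    measurable_pathSigma (projIcc _ _ _ u).2
  have hcV := continuous_extendProc hcont1
  have hAm : Measurable[pathSigma W1] A :=
    (measurable_integral_areaDensity (m := pathSigma W1) kV hcV h1.le).mul
      (measurable_integral_areaDensity (m := pathSigma W1) kV hcV h2.le)
  have hQm : Measurable[pathSigma W2] Q :=
    (((measurable_pathSigma mt').sub (measurable_pathSigma ms')).pow_const 2).mul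
      (((measurable_pathSigma mt).sub (measurable_pathSigma ms)).pow_const 2)
  have hAQ : IndepFun A Q P := by
    rw [IndepFun_iff_Indep]
    exact indep_of_indep_of_le_left (indep_of_indep_of_le_right hindep hQm.comap_le) hAm.comap_le
  simp_rw [e]
  rw [integral_const_mul, hAQ.integral_fun_mul_eq_mul_integral
    (hAm.mono hW1.pathSigma_le le_rfl).aestronglyMeasurable
    (hQm.mono hW2.pathSigma_le le_rfl).aestronglyMeasurable]
  have bA : |∫ ω, A ω ∂P| ≤ |fbmCov H s' t' s t| * ((t' - s') ^ 3 * (t - s) ^ 3) :=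
    hW1.abs_integral_area_mul_le hH hcont1 h0 h1.le h2.le h3 hs ht' h
  have bQ := hW2.integral_sq_mul_sq_le hH ms' mt' h1 ms mt h2
  have q0 : 0 ≤ ∫ ω, Q ω ∂P := integral_nonneg fun ω => by simp only [hQ]; positivity
  have d1 : 0 < t' - s' := by linarith
  have d2 : 0 < t - s := by linarith
  have d3 : 0 ≤ ((t' - s') ^ 3)⁻¹ * ((t - s) ^ 3)⁻¹ := by positivity
  rw [abs_mul, abs_of_nonneg d3, abs_mul, abs_of_nonneg q0]
  set M := ∫ x, x ^ 4 ∂(gaussianReal 0 1)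
  calc _ ≤ (((t' - s') ^ 3)⁻¹ * ((t - s) ^ 3)⁻¹) *
        ((|fbmCov H s' t' s t| * ((t' - s') ^ 3 * (t - s) ^ 3)) *
          (M * (t' - s') ^ (2 * H) * (t - s) ^ (2 * H))) := by
        refine mul_le_mul_of_nonneg_left ?_ (by positivity)
        exact mul_le_mul bA bQ q0 (by positivity)
    _ = _ := by
        field_simp
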